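/- Let r : S → ℝ be a reward and let π be a deterministic policy that is greedy with respect to its own Q-function, i.e., Q^π_r (s, π s) = max over a ∈ A of Q^π_r (s, a) for every s ∈ S. Then π is optimal for r: for every deterministic policy π' and every (s,a) ∈ S × A, Q^π_r (s,a) ≥ Q^{π'}_r (s,a). -/

import Mathlib

/-!
Write `M_π = P * E_π`, so that `(M_π q)(s,a) = ∑ s', P(s'|s,a) q(s', π s')`. Since `M_π` does not
increase the sup norm, the series defining `Q^π` converges, and shifting its index gives the
Bellman equation `Q^π = P r + γ M_π Q^π` (`Qfun_bellman`). Greediness of `π` implies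
`M_{π'} Q^π ≤ M_π Q^π` for every `π'`, so the difference `D = Q^{π'} - Q^π` satisfies
`D ≤ γ M_{π'} D`. Evaluating at a maximizer of `D` yields `max D ≤ γ max D`, hence `max D ≤ 0`.
-/

open Matrix

/-- The selection matrix `E_π` of a deterministic policy `π : S → A`:
`E_π (s, (s',a)) = 1` if `s' = s` and `a = π s`, and `0` otherwise. -/
noncomputable def selMat {S A : Type*} [DecidableEq S] [DecidableEq A] (π : S → A) :
    Matrix S (S × A) ℝ :=
  fun s p => if p.1 = s ∧ p.2 = π s then 1 else 0

/-- The Q-function of policy `π` for reward `r`: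
`Q^π_r = ∑_{t ≥ 0} γ^t • ((P * E_π)^t).mulVec (P.mulVec r)`. -/
noncomputable def Qfun {S A : Type*} [Fintype S] [Fintype A] [DecidableEq S] [DecidableEq A]
    (P : Matrix (S × A) S ℝ) (γ : ℝ) (π : S → A) (r : S → ℝ) : S × A → ℝ :=
  ∑' t : ℕ, γ ^ t • ((P * selMat π) ^ t).mulVec (P.mulVec r)

theorem mul_selMat_mulVec {S A : Type*} [Fintype S] [Fintype A] [DecidableEq S] [DecidableEq A]
    (P : Matrix (S × A) S ℝ) (π : S → A) (v : S × A → ℝ) (sa : S × A) :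
    ((P * selMat π).mulVec v) sa = ∑ s', P sa s' * v (s', π s') := by
  have hsel : ∀ s, (selMat π).mulVec v s = v (s, π s) := fun s => by
    have h : ∀ p : S × A, selMat π s p * v p = if p = (s, π s) then v p else 0 := fun p => by
      simp [selMat, Prod.ext_iff]
    simp [Matrix.mulVec, dotProduct, h]
  rw [← Matrix.mulVec_mulVec]
  simp only [Matrix.mulVec, dotProduct] at hsel ⊢
  simp only [hsel]

/-- `M_π` is a sup-norm contraction (in the weak sense), hence so are its powers. -/
theorem abs_pow_mulVec_le {S A : Type*} [Fintype S] [Fintype A] [DecidableEq S] [DecidableEq A]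
    (P : Matrix (S × A) S ℝ)
    (hP0 : ∀ sa s', 0 ≤ P sa s') (hP1 : ∀ sa, ∑ s', P sa s' = 1)
    (π : S → A) (v : S × A → ℝ) (t : ℕ) (sa : S × A) :
    |((P * selMat π) ^ t).mulVec v sa| ≤ ‖v‖ := by
  induction t generalizing sa with
  | zero => simpa using norm_le_pi_norm v sa
  | succ t ih =>
    rw [pow_succ', ← Matrix.mulVec_mulVec, mul_selMat_mulVec]
    calc _ ≤ ∑ s', |P sa s' * ((P * selMat π) ^ t).mulVec v (s', π s')| :=
          Finset.abs_sum_le_sum_abs _ _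
      _ ≤ ∑ s', P sa s' * ‖v‖ := by
          gcongr with s' _
          rw [abs_mul, abs_of_nonneg (hP0 sa s')]
          exact mul_le_mul_of_nonneg_left (ih _) (hP0 sa s')
      _ = ‖v‖ := by rw [← Finset.sum_mul, hP1, one_mul]

theorem summable_Qfun {S A : Type*} [Fintype S] [Fintype A] [DecidableEq S] [DecidableEq A]
    (P : Matrix (S × A) S ℝ) (γ : ℝ)
    (hP0 : ∀ sa s', 0 ≤ P sa s') (hP1 : ∀ sa, ∑ s', P sa s' = 1)
    (hγ0 : 0 ≤ γ) (hγ1 : γ < 1) (r : S → ℝ) (π : S → A) :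
    Summable fun t : ℕ => γ ^ t • ((P * selMat π) ^ t).mulVec (P.mulVec r) := by
  refine Summable.of_norm_bounded
    ((summable_geometric_of_lt_one hγ0 hγ1).mul_right ‖P.mulVec r‖) fun t => ?_
  rw [norm_smul, norm_pow, Real.norm_of_nonneg hγ0]
  gcongr
  exact (pi_norm_le_iff_of_nonneg (norm_nonneg _)).2 fun sa =>
    abs_pow_mulVec_le P hP0 hP1 π _ t sa

/-- The Bellman equation `Q^π = P r + γ M_π Q^π`. -/
theorem Qfun_bellman {S A : Type*} [Fintype S] [Fintype A] [DecidableEq S] [DecidableEq A]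
    (P : Matrix (S × A) S ℝ) (γ : ℝ)
    (hP0 : ∀ sa s', 0 ≤ P sa s') (hP1 : ∀ sa, ∑ s', P sa s' = 1)
    (hγ0 : 0 ≤ γ) (hγ1 : γ < 1) (r : S → ℝ) (π : S → A) (sa : S × A) :
    Qfun P γ π r sa = P.mulVec r sa + γ * ∑ s', P sa s' * Qfun P γ π r (s', π s') := by
  have hs := summable_Qfun P γ hP0 hP1 hγ0 hγ1 r π
  have hmap := (γ • (Matrix.mulVecLin (P * selMat π))).toContinuousLinearMap.map_tsum hs
  have h : Qfun P γ π r = P.mulVec r + γ • (P * selMat π).mulVec (Qfun P γ π r) := by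
    conv_lhs => rw [Qfun, hs.tsum_eq_zero_add]
    congr 1
    · simp
    · refine Eq.trans (tsum_congr fun t => ?_) hmap.symm
      simp [pow_succ', smul_smul, Matrix.mulVec_mulVec, Matrix.mul_assoc, mul_comm (γ ^ t)]
  rw [← mul_selMat_mulVec]
  exact congrFun h sa

/-- If a deterministic policy `π` is greedy with respect to its own
Q-function `Q^π_r`, then `π` is optimal for `r`: for every deterministic policy `π'` and
every state-action pair, `Q^π_r (s,a) ≥ Q^{π'}_r (s,a)`. -/
theorem stmt2 {S A : Type*} [Fintype S] [Fintype A] [Nonempty S] [Nonempty A]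
    [DecidableEq S] [DecidableEq A]
    (P : Matrix (S × A) S ℝ) (γ : ℝ)
    (hP0 : ∀ sa s', 0 ≤ P sa s') (hP1 : ∀ sa, ∑ s', P sa s' = 1)
    (hγ0 : 0 ≤ γ) (hγ1 : γ < 1)
    (r : S → ℝ) (π : S → A)
    (hgreedy : ∀ s : S, Qfun P γ π r (s, π s) =
      Finset.univ.sup' Finset.univ_nonempty (fun a : A => Qfun P γ π r (s, a))) :
    ∀ π' : S → A, ∀ sa : S × A, Qfun P γ π' r sa ≤ Qfun P γ π r sa := by
  intro π' sa
  have hgr : ∀ s a, Qfun P γ π r (s, a) ≤ Qfun P γ π r (s, π s) := fun s a => by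
    rw [hgreedy s]
    exact Finset.le_sup' (fun a : A => Qfun P γ π r (s, a)) (Finset.mem_univ a)
  obtain ⟨x, hx⟩ := Finite.exists_max fun y => Qfun P γ π' r y - Qfun P γ π r y
  set m := Qfun P γ π' r x - Qfun P γ π r x with hm
  -- `M_{π'} Q^{π'} ≤ M_{π'} Q^π + m ≤ M_π Q^π + m` at `x`, using that the rows of `P` sum to `1`
  have hsum : ∑ s', P x s' * Qfun P γ π' r (s', π' s')
      ≤ ∑ s', P x s' * Qfun P γ π r (s', π s') + m := by
    calc _ ≤ ∑ s', P x s' * (Qfun P γ π r (s', π s') + m) :=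
          Finset.sum_le_sum fun s' _ => mul_le_mul_of_nonneg_left
            (by linarith [hx (s', π' s'), hgr s' (π' s')]) (hP0 x s')
      _ = _ := by simp only [mul_add, Finset.sum_add_distrib, ← Finset.sum_mul, hP1, one_mul]
  have hmγ : m ≤ γ * m := by
    have h := mul_le_mul_of_nonneg_left hsum hγ0
    have h1 := Qfun_bellman P γ hP0 hP1 hγ0 hγ1 r π x
    have h2 := Qfun_bellman P γ hP0 hP1 hγ0 hγ1 r π' x
    linarith
  have hm0 : m ≤ 0 := by nlinarith
  linarith [hx sa]
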